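/- arXiv:math/0112086 — 2 statements merged into one kernel-verified Lean document; each statement's English description precedes it below -/
import Mathlib

section
/- Let S = {1,3,9,19} and r = 3·2^{33}−8. Then s̃(r,S) = 12 and the unique r-tiling sequence with tiles in S of length 12 is (3,19),(5,3),(8,19),(10,3),(13,19),(15,3),(18,19),(20,3),(23,19),(25,3),(28,19),(30,19); that is, 3·2^{33}−8 = 19·2^{30}+19·2^{28}+3·2^{25}+19·2^{23}+3·2^{20}+19·2^{18}+3·2^{15}+19·2^{13}+3·2^{10}+19·2^{8}+3·2^{5}+19·2^{3} and K̃(r,S) consists of exactly this one sequence. -/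
open scoped BigOperators

/-- `s(n)`: the number of 1's in the binary expansion of `n`. -/
def binDigitSum (n : ℕ) : ℕ := (Nat.digits 2 n).sum

/-- An `r`-tiling sequence with tiles in `S`, recorded as a list of pairs `(b_i, ℓ_i)`:
each `ℓ_i ∈ S`, the `b_i` are weakly increasing, `ℓ_i > ℓ_{i+1}` whenever `b_i = b_{i+1}`,
and `∑ ℓ_i·2^{b_i} = r`. -/
def IsTiling (S : Finset ℕ) (r : ℕ) (L : List (ℕ × ℕ)) : Prop :=
  (∀ p ∈ L, p.2 ∈ S) ∧
  L.Chain' (fun p q => p.1 ≤ q.1 ∧ (p.1 = q.1 → q.2 < p.2)) ∧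
  (L.map fun p => p.2 * 2 ^ p.1).sum = r

/-- `s̃(r,S)`: the minimal length of an `r`-tiling sequence (`⊤` if none exists). -/
noncomputable def stilde (S : Finset ℕ) (r : ℕ) : ℕ∞ :=
  sInf {n : ℕ∞ | ∃ L : List (ℕ × ℕ), IsTiling S r L ∧ (L.length : ℕ∞) = n}

/-- `K̃(r,S)`: the set of `r`-tiling sequences of minimal length. -/
def Ktilde (S : Finset ℕ) (r : ℕ) : Set (List (ℕ × ℕ)) :=
  {L | IsTiling S r L ∧ (L.length : ℕ∞) = stilde S r}

/-
A potential on partial sums gives the lower bound: adding a tile from {1, 3, 9, 19} to `x` lowers it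
by at most 5, doubling lowers it by exactly 2, and its value at `3 * 2 ^ a` is `-2 * a`. Tiles are
added with lowest bases first, so the partial sum is divisible by `2 ^ b` when a tile of base `b`
arrives (up to one degenerate case) and the step inequality at base 0 is all that is needed.

Starting at 8, a tiling of `3 * 2 ^ (5 * k + 8) - 8` therefore has at least `2 * k + 2` tiles, and
one of that length loses exactly 5 at every step. All such tight steps start from odd `x`, so
each next base is forced to be the 2-adic valuation of the partial sum. From 1 the only tight step
is 1 + 19 = 5 * 4; from 5 they are 5 + 3 = 8, which closes the cycle, and 5 + 19 = 3 * 8, after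
which the only tight step 3 + 19 = 11 * 2 leads to a dead end, so that the tiling must stop.
-/

theorem stilde_eq_and_Ktilde_eq_singleton {S : Finset ℕ} {r : ℕ} {L₀ : List (ℕ × ℕ)}
    (h₀ : IsTiling S r L₀) (huniq : ∀ L, IsTiling S r L → L.length ≤ L₀.length → L = L₀) :
    stilde S r = L₀.length ∧ Ktilde S r = {L₀} := by
  have hmin : stilde S r = L₀.length := by
    refine le_antisymm (sInf_le ⟨L₀, h₀, rfl⟩) (le_sInf ?_)
    rintro _ ⟨L, hL, rfl⟩
    obtain hle | hlt := le_or_gt L.length L₀.length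
    · rw [huniq L hL hle]
    · exact_mod_cast hlt.le
  refine ⟨hmin, Set.ext fun L => ⟨fun ⟨hL, hlen⟩ => huniq L hL ?_, ?_⟩⟩
  · rw [hmin] at hlen
    exact_mod_cast hlen.le
  · rintro rfl
    exact ⟨h₀, hmin.symm⟩

theorem odd_mul_two_pow_inj {c c' m n : ℕ} (hc : Odd c) (hc' : Odd c')
    (h : c * 2 ^ m = c' * 2 ^ n) : c = c' ∧ m = n := by
  wlog hmn : m ≤ n generalizing c c' m n
  · exact (this hc' hc h.symm (Nat.le_of_not_le hmn)).imp Eq.symm Eq.symm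
  obtain ⟨j, rfl⟩ := Nat.exists_eq_add_of_le hmn
  have hcc' : c = c' * 2 ^ j :=
    Nat.eq_of_mul_eq_mul_right (Nat.two_pow_pos m) (by rw [h]; ring)
  obtain rfl : j = 0 := by
    by_contra hj
    exact Nat.not_even_iff_odd.2 (hcc' ▸ hc) ((even_two.pow_of_ne_zero hj).mul_left c')
  simpa using hcc'

/-- The potential of a partial sum `d`, in units of a fifth of a tile: at least
`(potential d + 2 * a) / 5` tiles are needed to complete `d` to `3 * 2 ^ a`, lowest bases first.
With `k = ⌊log₂ d⌋` its value is `c - 2 * k`, where `c` depends only on `d / 2 ^ k ∈ [1, 2)`. As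
`0 ≤ c ≤ 3`, a step that raises `k` by at most one lowers the potential by at most `5`; the
thresholds in `c` are fitted to the finitely many other steps and let every tight step start at
an odd partial sum. -/
def potential (d : ℕ) : ℤ :=
  (if d = 2 ^ Nat.log 2 d then 0
    else if 2 * d = 3 * 2 ^ Nat.log 2 d then 2
    else if 13 * 2 ^ Nat.log 2 d ≤ 8 * d then 1
    else 3) - 2 * Nat.log 2 d

theorem potential_two_mul {d : ℕ} (hd : d ≠ 0) : potential (2 * d) = potential d - 2 := by
  have hlog : Nat.log 2 (2 * d) = Nat.log 2 d + 1 := by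
    rw [mul_comm, Nat.log_mul_base one_lt_two hd]
  simp only [potential, hlog, pow_succ]
  grind

theorem potential_mul_two_pow {d : ℕ} (hd : d ≠ 0) (m : ℕ) :
    potential (d * 2 ^ m) = potential d - 2 * m := by
  induction m with
  | zero => simp
  | succ m ih =>
    rw [pow_succ', mul_left_comm, potential_two_mul (by positivity), ih]
    push_cast
    ring

theorem potential_two_pow (a : ℕ) : potential (2 ^ a) = -2 * a := by
  simp [potential]

theorem potential_three_mul_two_pow (a : ℕ) : potential (3 * 2 ^ a) = -2 * a := by
  have hthree : potential 3 = 0 := by decide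
  rw [potential_mul_two_pow three_ne_zero, hthree]
  ring

theorem potential_lt_add_five_of_large {x l : ℕ} (hx : 64 ≤ x) (hl : l ≤ 19) :
    potential x < potential (x + l) + 5 := by
  have hhigh : x < 2 ^ Nat.log 2 x * 2 := Nat.lt_pow_succ_log_self one_lt_two x
  have hmono : Nat.log 2 x ≤ Nat.log 2 (x + l) := Nat.log_mono_right (by omega)
  have hpow : 2 ^ 6 ≤ 2 ^ Nat.log 2 x :=
    Nat.pow_le_pow_right two_pos (Nat.le_log_of_pow_le one_lt_two hx)
  have hstep : Nat.log 2 (x + l) < Nat.log 2 x + 2 :=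
    Nat.log_lt_of_lt_pow (by omega) (by rw [pow_add]; omega)
  obtain hlog | hlog : Nat.log 2 (x + l) = Nat.log 2 x ∨ Nat.log 2 (x + l) = Nat.log 2 x + 1 := by
    omega
  · simp only [potential, hlog]
    split_ifs <;> omega
  · -- Equality needs `x + l` to be a power of two and `x` small enough that
    -- `3 * 2 ^ Nat.log 2 x < 8 * l`.
    simp only [potential, hlog, pow_succ]
    split_ifs <;> push_cast <;> omega

/-- The tile set of the theorem. -/
abbrev tileSet : Finset ℕ := {1, 3, 9, 19}

/-- The pairs `(x, l)` for which adding the tile `l` at base `0` to `x` pays exactly its price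
`5` in potential. -/
def tightSteps : Finset (ℕ × ℕ) :=
  {(1, 19), (3, 19), (5, 3), (5, 19), (7, 9), (13, 19), (23, 9), (45, 19)}

theorem odd_of_mem_tightSteps {x l : ℕ} (h : (x, l) ∈ tightSteps) : Odd x :=
  (by decide : ∀ p ∈ tightSteps, Odd p.1) _ h

theorem potential_step {x l : ℕ} (hx : x ≠ 0) (hl : l ∈ tileSet) :
    potential x < potential (x + l) + 5 ∨
      potential x = potential (x + l) + 5 ∧ (x, l) ∈ tightSteps := by
  obtain hlarge | hsmall := le_or_gt 64 x
  · exact .inl (potential_lt_add_five_of_large hlarge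
      ((by decide : ∀ l ∈ tileSet, l ≤ 19) l hl))
  · have hcheck : ∀ x < 64, x ≠ 0 → ∀ l ∈ tileSet, potential x < potential (x + l) + 5 ∨
        potential x = potential (x + l) + 5 ∧ (x, l) ∈ tightSteps := by
      decide
    exact hcheck x hsmall hx l hl

/-- `L` completes the partial sum `d` to `N` by tiles in `S`, listed by weakly increasing bases;
unlike in `IsTiling`, the order of tiles with equal bases is free and tiles may repeat. -/
structure IsCompletion (S : Finset ℕ) (d N : ℕ) (L : List (ℕ × ℕ)) : Prop where
  mem : ∀ p ∈ L, p.2 ∈ S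
  sorted : L.Pairwise fun p q => p.1 ≤ q.1
  add_sum_eq : d + (L.map fun p => p.2 * 2 ^ p.1).sum = N

theorem IsTiling.isCompletion {S : Finset ℕ} {r : ℕ} {L : List (ℕ × ℕ)} (h : IsTiling S r L)
    (d : ℕ) : IsCompletion S d (d + r) L where
  mem := h.1
  sorted := List.isChain_iff_pairwise.1 (h.2.1.imp fun _ _ hpq => hpq.1)
  add_sum_eq := by rw [h.2.2]

namespace IsCompletion

variable {S : Finset ℕ} {a b d l N : ℕ} {L : List (ℕ × ℕ)}

theorem of_cons (h : IsCompletion S d N ((b, l) :: L)) : IsCompletion S (d + l * 2 ^ b) N L where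
  mem := (List.forall_mem_cons.1 h.mem).2
  sorted := (List.pairwise_cons.1 h.sorted).2
  add_sum_eq := by simpa [add_assoc] using h.add_sum_eq

theorem two_pow_dvd_sum_of_cons (h : IsCompletion S d N ((b, l) :: L)) :
    2 ^ b ∣ (L.map fun p => p.2 * 2 ^ p.1).sum := by
  refine List.dvd_sum fun n hn => ?_
  obtain ⟨p, hp, rfl⟩ := List.mem_map.1 hn
  exact (pow_dvd_pow 2 ((List.pairwise_cons.1 h.sorted).1 p hp)).mul_left p.2

theorem eq_mul_two_pow_or_eq (h : IsCompletion S d (3 * 2 ^ a) ((b, l) :: L)) (hd : d ≠ 0)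
    (hl : l ≠ 0) : (∃ x, d = x * 2 ^ b) ∨ d = 2 ^ a := by
  have hsum := h.of_cons.add_sum_eq
  obtain ⟨s, hs⟩ := h.two_pow_dvd_sum_of_cons
  rw [hs] at hsum
  obtain hba | hab := le_or_gt b a
  · left
    have htarget : 2 ^ b ∣ d + 2 ^ b * (l + s) := by
      rw [show d + 2 ^ b * (l + s) = 3 * 2 ^ a by rw [← hsum]; ring]
      exact (pow_dvd_pow 2 hba).mul_left 3
    exact exists_eq_mul_left_of_dvd ((Nat.dvd_add_left (dvd_mul_right _ _)).1 htarget)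
  · right
    obtain ⟨j, rfl⟩ := Nat.exists_eq_add_of_lt hab
    have hmul : d + 2 ^ a * (2 * (2 ^ j * (l + s))) = 2 ^ a * 3 := by
      rw [mul_comm (2 ^ a) 3, ← hsum]; ring
    have hlt : 2 * (2 ^ j * (l + s)) < 3 :=
      Nat.lt_of_mul_lt_mul_left (show 2 ^ a * _ < 2 ^ a * 3 by omega)
    have hpos : 0 < 2 ^ j * (l + s) := by positivity
    rw [show 2 ^ j * (l + s) = 1 by omega] at hmul
    omega

theorem potential_add_le (h : IsCompletion tileSet d (3 * 2 ^ a) L) (hd : d ≠ 0) :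
    potential d + 2 * a ≤ 5 * L.length := by
  induction L generalizing d with
  | nil =>
    obtain rfl : d = 3 * 2 ^ a := by simpa using h.add_sum_eq
    simp [potential_three_mul_two_pow]
  | cons p L ih =>
    obtain ⟨b, l⟩ := p
    have hl : l ∈ tileSet := h.mem _ List.mem_cons_self
    obtain ⟨x, rfl⟩ | rfl := h.eq_mul_two_pow_or_eq hd (by rintro rfl; simp at hl)
    · have hx : x ≠ 0 := left_ne_zero_of_mul hd
      have hrest := ih h.of_cons (by positivity)
      rw [← add_mul, potential_mul_two_pow (by omega)] at hrest
      rw [potential_mul_two_pow hx, List.length_cons]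
      have hstep := potential_step hx hl
      push_cast
      omega
    · rw [potential_two_pow]
      omega

end IsCompletion

/-- A completion of `d` to `3 * 2 ^ a` that is no longer than the potential bound; every one of its
steps is then forced to be tight. -/
structure IsTightCompletion (a d : ℕ) (L : List (ℕ × ℕ)) : Prop
    extends IsCompletion tileSet d (3 * 2 ^ a) L where
  tight : 5 * L.length ≤ potential d + 2 * a

/-- The optimal completion of `2 ^ b` to `3 * 2 ^ (b + 5 * k + 5)`: the cycle `1 → 5 → 1` of tight
steps `k` times, then the exit `1 → 5 → 3`. Starting at `b = 3` matches the `8` in the theorem. -/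
def minimalTiling (b : ℕ) : ℕ → List (ℕ × ℕ)
  | 0 => [(b, 19), (b + 2, 19)]
  | k + 1 => (b, 19) :: (b + 2, 3) :: minimalTiling (b + 5) k

namespace IsTightCompletion

variable {a c m : ℕ} {L : List (ℕ × ℕ)}

theorem exists_cons (h : IsTightCompletion a (c * 2 ^ m) L) (hc : Odd c)
    (hne : c * 2 ^ m ≠ 3 * 2 ^ a) :
    ∃ l L', L = (m, l) :: L' ∧ (c, l) ∈ tightSteps ∧
      IsTightCompletion a ((c + l) * 2 ^ m) L' := by
  obtain _ | ⟨⟨b, l⟩, L'⟩ := L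
  · exact absurd (by simpa using h.add_sum_eq) hne
  have hl : l ∈ tileSet := h.mem _ List.mem_cons_self
  have hd : c * 2 ^ m ≠ 0 := by have := hc.pos; positivity
  have htight := h.tight
  rw [List.length_cons] at htight
  obtain ⟨x, hx⟩ | hpow := h.eq_mul_two_pow_or_eq hd (by rintro rfl; simp at hl)
  · have hx0 : x ≠ 0 := left_ne_zero_of_mul (hx ▸ hd)
    have hrest : IsCompletion tileSet ((x + l) * 2 ^ b) (3 * 2 ^ a) L' := by
      rw [add_mul, ← hx]
      exact h.of_cons
    have hbound := hrest.potential_add_le (by positivity)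
    rw [hx, potential_mul_two_pow hx0] at htight
    rw [potential_mul_two_pow (by omega)] at hbound
    push_cast at htight
    obtain hlt | ⟨heq, hmem⟩ := potential_step hx0 hl
    · omega
    obtain ⟨rfl, rfl⟩ := odd_mul_two_pow_inj hc (odd_of_mem_tightSteps hmem) hx
    refine ⟨l, L', rfl, hmem, hrest, ?_⟩
    rw [potential_mul_two_pow (by omega)]
    omega
  · rw [hpow, potential_two_pow] at htight
    push_cast at htight
    omega

theorem eq_nil_of_three_mul_two_pow (h : IsTightCompletion a (3 * 2 ^ m) L) : L = [] := by
  by_cases heq : 3 * 2 ^ m = 3 * 2 ^ a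
  · have htight := h.tight
    rw [heq, potential_three_mul_two_pow] at htight
    exact List.eq_nil_of_length_eq_zero (by omega)
  · obtain ⟨l, L₁, -, hl, h₁⟩ := h.exists_cons (by decide) heq
    obtain rfl : l = 19 := by simpa [tightSteps] using hl
    rw [show (3 + 19) * 2 ^ m = 11 * 2 ^ (m + 1) by ring] at h₁
    have hne : 11 * 2 ^ (m + 1) ≠ 3 * 2 ^ a := fun h' =>
      absurd (odd_mul_two_pow_inj (by decide) (by decide) h').1 (by decide)
    obtain ⟨l', -, -, hl', -⟩ := h₁.exists_cons (by decide) hne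
    simp [tightSteps] at hl'

theorem exists_cons_cons (h : IsTightCompletion a (2 ^ m) L) :
    ∃ l L', L = (m, 19) :: (m + 2, l) :: L' ∧
      (l = 3 ∧ IsTightCompletion a (2 ^ (m + 5)) L' ∨
        l = 19 ∧ IsTightCompletion a (3 * 2 ^ (m + 5)) L') := by
  rw [← one_mul (2 ^ m)] at h
  obtain ⟨l₁, L₁, rfl, hl₁, h₁⟩ := h.exists_cons odd_one fun h' =>
    absurd (odd_mul_two_pow_inj odd_one (by decide) h').1 (by decide)
  obtain rfl : l₁ = 19 := by simpa [tightSteps] using hl₁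
  rw [show (1 + 19) * 2 ^ m = 5 * 2 ^ (m + 2) by ring] at h₁
  obtain ⟨l, L', rfl, hl, h'⟩ := h₁.exists_cons (by decide) fun h' =>
    absurd (odd_mul_two_pow_inj (by decide) (by decide) h').1 (by decide)
  refine ⟨l, L', rfl, ?_⟩
  obtain rfl | rfl : l = 3 ∨ l = 19 := by simpa [tightSteps] using hl
  · exact .inl ⟨rfl, by rwa [show (5 + 3) * 2 ^ (m + 2) = 2 ^ (m + 5) by ring] at h'⟩
  · exact .inr ⟨rfl, by rwa [show (5 + 19) * 2 ^ (m + 2) = 3 * 2 ^ (m + 5) by ring] at h'⟩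

theorem eq_minimalTiling {k : ℕ} (h : IsTightCompletion (m + 5 * k + 5) (2 ^ m) L) :
    L = minimalTiling m k := by
  induction k generalizing m L with
  | zero =>
    have hlen := h.tight
    rw [potential_two_pow] at hlen
    obtain ⟨l, L', rfl, ⟨rfl, h'⟩ | ⟨rfl, h'⟩⟩ := h.exists_cons_cons
    · obtain ⟨l, L'', rfl, -⟩ := h'.exists_cons_cons
      simp only [List.length_cons] at hlen
      omega
    · rw [h'.eq_nil_of_three_mul_two_pow, minimalTiling]
  | succ k ih =>
    obtain ⟨l, L', rfl, ⟨rfl, h'⟩ | ⟨rfl, h'⟩⟩ := h.exists_cons_cons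
    · rw [show m + 5 * (k + 1) + 5 = m + 5 + 5 * k + 5 by ring] at h'
      rw [ih h', minimalTiling]
    · obtain rfl := h'.eq_nil_of_three_mul_two_pow
      have hpow := h'.add_sum_eq
      simp only [List.map_nil, List.sum_nil, add_zero] at hpow
      have := (odd_mul_two_pow_inj (by decide) (by decide) hpow).2
      omega

end IsTightCompletion

theorem length_minimalTiling (b k : ℕ) : (minimalTiling b k).length = 2 * k + 2 := by
  induction k generalizing b with
  | zero => rfl
  | succ k ih => simp only [minimalTiling, List.length_cons, ih]; ring

theorem mem_tileSet_of_mem_minimalTiling {b k : ℕ} {p : ℕ × ℕ} (hp : p ∈ minimalTiling b k) :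
    p.2 ∈ tileSet := by
  induction k generalizing b with
  | zero =>
    simp only [minimalTiling, List.mem_cons, List.not_mem_nil, or_false] at hp
    obtain rfl | rfl := hp <;> simp
  | succ k ih =>
    simp only [minimalTiling, List.mem_cons] at hp
    obtain rfl | rfl | hp := hp
    · simp
    · simp
    · exact ih hp

theorem isChain_cons_minimalTiling {b c : ℕ} (hcb : c < b) (l k : ℕ) :
    ((c, l) :: minimalTiling b k).IsChain
      fun p q => p.1 ≤ q.1 ∧ (p.1 = q.1 → q.2 < p.2) := by
  induction k generalizing b c l with
  | zero =>
    simp only [minimalTiling, List.isChain_cons_cons, List.isChain_singleton]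
    exact ⟨by omega, by omega, trivial⟩
  | succ k ih =>
    have htail := ih (show b + 2 < b + 5 by omega) 3
    simp only [minimalTiling, List.isChain_cons_cons]
    exact ⟨by omega, by omega, htail⟩

theorem two_pow_add_sum_minimalTiling (b k : ℕ) :
    2 ^ b + ((minimalTiling b k).map fun p => p.2 * 2 ^ p.1).sum = 3 * 2 ^ (b + 5 * k + 5) := by
  induction k generalizing b with
  | zero =>
    simp only [minimalTiling, List.map_cons, List.map_nil, List.sum_cons, List.sum_nil]
    ring
  | succ k ih =>
    rw [show b + 5 * (k + 1) + 5 = b + 5 + 5 * k + 5 by ring, ← ih (b + 5)]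
    simp only [minimalTiling, List.map_cons, List.sum_cons]
    ring

theorem isTiling_minimalTiling (k : ℕ) :
    IsTiling tileSet (3 * 2 ^ (5 * k + 8) - 8) (minimalTiling 3 k) := by
  refine ⟨fun p hp => mem_tileSet_of_mem_minimalTiling hp,
    (isChain_cons_minimalTiling (show 2 < 3 by decide) 0 k).tail, ?_⟩
  have hsum := two_pow_add_sum_minimalTiling 3 k
  rw [show 3 + 5 * k + 5 = 5 * k + 8 by ring] at hsum
  omega

theorem eq_minimalTiling_of_isTiling {k : ℕ} {L : List (ℕ × ℕ)}
    (hL : IsTiling tileSet (3 * 2 ^ (5 * k + 8) - 8) L) (hlen : L.length ≤ 2 * k + 2) :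
    L = minimalTiling 3 k := by
  have hsum : 2 ^ 3 + (3 * 2 ^ (5 * k + 8) - 8) = 3 * 2 ^ (3 + 5 * k + 5) := by
    have hpow : 2 ^ 8 ≤ 2 ^ (5 * k + 8) := Nat.pow_le_pow_right two_pos (Nat.le_add_left _ _)
    rw [show 3 + 5 * k + 5 = 5 * k + 8 by ring]
    omega
  have hcompl := hL.isCompletion (2 ^ 3)
  rw [hsum] at hcompl
  refine IsTightCompletion.eq_minimalTiling ⟨hcompl, ?_⟩
  rw [potential_two_pow]
  push_cast
  omega

theorem stmt14_general (k : ℕ) :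
    stilde {1, 3, 9, 19} (3 * 2 ^ (5 * k + 8) - 8) = ((2 * k + 2 : ℕ) : ℕ∞) ∧
      Ktilde {1, 3, 9, 19} (3 * 2 ^ (5 * k + 8) - 8) = {minimalTiling 3 k} := by
  rw [← length_minimalTiling 3 k]
  exact stilde_eq_and_Ktilde_eq_singleton (isTiling_minimalTiling k) fun L hL hlen =>
    eq_minimalTiling_of_isTiling hL (hlen.trans_eq (length_minimalTiling 3 k))

theorem stmt14 :
    (3 * 2 ^ 33 - 8 : ℕ) = 19 * 2 ^ 30 + 19 * 2 ^ 28 + 3 * 2 ^ 25 + 19 * 2 ^ 23 +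
      3 * 2 ^ 20 + 19 * 2 ^ 18 + 3 * 2 ^ 15 + 19 * 2 ^ 13 + 3 * 2 ^ 10 +
      19 * 2 ^ 8 + 3 * 2 ^ 5 + 19 * 2 ^ 3 ∧
    stilde {1, 3, 9, 19} (3 * 2 ^ 33 - 8) = 12 ∧
    Ktilde {1, 3, 9, 19} (3 * 2 ^ 33 - 8) =
      {[(3, 19), (5, 3), (8, 19), (10, 3), (13, 19), (15, 3), (18, 19), (20, 3),
        (23, 19), (25, 3), (28, 19), (30, 19)]} :=
  ⟨by norm_num, stmt14_general 5⟩
end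

section
/- Let F be an algebraically closed field of characteristic 2 and let c_1, c_3 ∈ F. Then the set of triples (a, t_0, x_0) ∈ F^3 with a ≠ 0 satisfying simultaneously the three equations (i) a^{4096} + c_3^{32}·a^{1024} + c_1^{16}·a^{256} + c_3^{16}·a^{64} + c_1^{4}·a^{16} + c_3^{2}·a^{4} + a = 0, (ii) a^{36}·t_0^{6} + a^{24}·t_0^{4} + a^{12}·t_0^{2} + a^{84}·t_0 + a^{1092} + c_3^{8}·a^{324} + a^{312} + a^{156} + c_1^{4}·a^{132} + c_3^{2}·a^{120} + a^{117} + c_3·a^{84} + 1 = 0, and (iii) a^{576} + a^{264} + c_3^{4}·a^{192} + (x_0^{4} + x_0)·a^{160} + a^{108} + t_0^{8} = 0, is a finite set with exactly 4095·6·4 = 98280 elements. -/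
/-!
Each of the three equations has the shape `f(y²) + z * y = 0` in its own leading unknown `a`, `t₀`,
`x₀`, where `z` is `1`, `a⁸⁴`, `a¹⁶⁰` respectively. In characteristic 2 the derivative of the
left-hand side is the constant `z ≠ 0`, so its roots are simple and there are `2 * deg f` of them:
`4096` (one of which is `a = 0`), `6` and `4`, independently of the unknowns already chosen.
-/

open Polynomial

theorem encard_setOf_mem_and_mem {α β : Type*} {s : Set α} {t : α → Set β} {n : ℕ}
    (ht : ∀ a ∈ s, (t a).encard = n) :
    {q : α × β | q.1 ∈ s ∧ q.2 ∈ t q.1}.encard = s.encard * n := by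
  have fibreEquiv (a : s) : Nonempty (t a ≃ Fin n) := by
    have : Finite (t a) := Set.finite_of_encard_eq_coe (ht a a.2)
    exact ⟨Finite.equivFinOfCardEq (by rw [Nat.card_coe_set_eq, Set.ncard_def, ht a a.2]; rfl)⟩
  let e : {q : α × β | q.1 ∈ s ∧ q.2 ∈ t q.1} ≃ s × Fin n := calc
    _ ≃ Σ a : s, t a :=
      ⟨fun q => ⟨⟨q.1.1, q.2.1⟩, q.1.2, q.2.2⟩, fun x => ⟨(x.1, x.2), x.1.2, x.2.2⟩,
        fun _ => rfl, fun _ => rfl⟩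
    _ ≃ Σ _ : s, Fin n := Equiv.sigmaCongrRight fun a => (fibreEquiv a).some
    _ ≃ s × Fin n := Equiv.sigmaEquivProd _ _
  rw [← ENat.card_coe_set_eq, ENat.card_congr e, ENat.card_prod, ENat.card_coe_set_eq]
  simp

theorem natDegree_expand_add_C_mul_X {R : Type*} [CommSemiring R] {p : ℕ} (hp : 1 < p) {f : R[X]}
    (hf : f.natDegree ≠ 0) (z : R) : (expand R p f + C z * X).natDegree = f.natDegree * p := by
  rw [natDegree_add_eq_left_of_natDegree_lt, natDegree_expand]
  calc (C z * X).natDegree ≤ 1 := (natDegree_C_mul_le z X).trans natDegree_X_le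
    _ < p := hp
    _ ≤ f.natDegree * p := Nat.le_mul_of_pos_left p (Nat.pos_of_ne_zero hf)
    _ = (expand R p f).natDegree := (natDegree_expand p f).symm

theorem separable_expand_add_C_mul_X {R : Type*} [CommSemiring R] (p : ℕ) [CharP R p] (f : R[X])
    {z : R} (hz : IsUnit z) : (expand R p f + C z * X).Separable := by
  have hderiv : derivative (expand R p f + C z * X) = C z := by
    simp [derivative_expand]
  rw [separable_def, hderiv]
  exact isCoprime_one_right.of_isCoprime_of_dvd_right (hz.map C).dvd

section IsSepClosed

variable {F : Type*} [Field F] [IsSepClosed F]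

theorem encard_setOf_eval_eq_zero_of_separable {g : F[X]} (hg : g.Separable) :
    {x | g.eval x = 0}.encard = g.natDegree := by
  classical
  have hroots : {x | g.eval x = 0} = g.rootSet F := by
    ext x
    simp [mem_rootSet, hg.ne_zero]
  rw [hroots, Set.encard_eq_coe_toFinset_card, Set.toFinset_card,
    card_rootSet_eq_natDegree hg (IsSepClosed.splits_codomain g hg)]

theorem encard_setOf_eval_pow_add_mul_eq_zero (p : ℕ) [Fact p.Prime] [CharP F p] {f : F[X]}
    (hf : f.natDegree ≠ 0) {z : F} (hz : z ≠ 0) :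
    {x | f.eval (x ^ p) + z * x = 0}.encard = (f.natDegree * p : ℕ) := by
  rw [← natDegree_expand_add_C_mul_X (Fact.out : p.Prime).one_lt hf z,
    ← encard_setOf_eval_eq_zero_of_separable (separable_expand_add_C_mul_X p f hz.isUnit)]
  simp [expand_eval]

theorem encard_setOf_ne_zero_and_eval_pow_add_mul_eq_zero (p : ℕ) [Fact p.Prime] [CharP F p]
    {f : F[X]} (hf : f.natDegree ≠ 0) (hf₀ : f.eval 0 = 0) {z : F} (hz : z ≠ 0) :
    {x | x ≠ 0 ∧ f.eval (x ^ p) + z * x = 0}.encard = (f.natDegree * p - 1 : ℕ) := by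
  have hset : {x | x ≠ 0 ∧ f.eval (x ^ p) + z * x = 0} =
      {x | f.eval (x ^ p) + z * x = 0} \ {0} := Set.ext fun _ => and_comm
  have hzero : 0 ∈ {x | f.eval (x ^ p) + z * x = 0} := by
    simp [hf₀, (Fact.out : p.Prime).ne_zero]
  rw [hset, Set.encard_sdiff_singleton_of_mem hzero,
    encard_setOf_eval_pow_add_mul_eq_zero p hf hz]
  rfl

variable [CharP F 2]

theorem encard_nonzero_roots_additive (c₁ c₂ c₃ c₄ c₅ : F) :
    {a : F | a ≠ 0 ∧ a ^ 4096 + c₁ * a ^ 1024 + c₂ * a ^ 256 + c₃ * a ^ 64 + c₄ * a ^ 16 +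
      c₅ * a ^ 4 + a = 0}.encard = 4095 := by
  let f : F[X] := X ^ 2048 + C c₁ * X ^ 512 + C c₂ * X ^ 128 + C c₃ * X ^ 32 + C c₄ * X ^ 8 +
    C c₅ * X ^ 2
  have hdeg : f.natDegree = 2048 := by unfold f; compute_degree!
  have heval (a : F) : f.eval (a ^ 2) + 1 * a = a ^ 4096 + c₁ * a ^ 1024 + c₂ * a ^ 256 +
      c₃ * a ^ 64 + c₄ * a ^ 16 + c₅ * a ^ 4 + a := by
    simp only [f, eval_add, eval_mul, eval_C, eval_pow, eval_X, ← pow_mul, one_mul,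
      Nat.reduceMul]
  have hroots := encard_setOf_ne_zero_and_eval_pow_add_mul_eq_zero 2 (f := f) (by simp [hdeg])
    (by simp [f]) one_ne_zero
  simp only [heval, hdeg] at hroots
  exact hroots

theorem encard_roots_sextic {u z : F} (hu : u ≠ 0) (v w : F) (hz : z ≠ 0) (k : F) :
    {t : F | u * t ^ 6 + v * t ^ 4 + w * t ^ 2 + z * t + k = 0}.encard = 6 := by
  let f : F[X] := C u * X ^ 3 + C v * X ^ 2 + C w * X + C k
  have hdeg : f.natDegree = 3 := natDegree_cubic hu
  have heval (t : F) : f.eval (t ^ 2) + z * t =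
      u * t ^ 6 + v * t ^ 4 + w * t ^ 2 + z * t + k := by
    simp only [f, eval_add, eval_mul, eval_C, eval_pow, eval_X]
    ring
  have hroots := encard_setOf_eval_pow_add_mul_eq_zero 2 (f := f) (by simp [hdeg]) hz
  simp only [heval, hdeg] at hroots
  exact hroots

theorem encard_roots_quartic {u : F} (hu : u ≠ 0) (k : F) :
    {x : F | (x ^ 4 + x) * u + k = 0}.encard = 4 := by
  let f : F[X] := C u * X ^ 2 + C k
  have hdeg : f.natDegree = 2 := by unfold f; compute_degree!
  have heval (x : F) : f.eval (x ^ 2) + u * x = (x ^ 4 + x) * u + k := by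
    simp only [f, eval_add, eval_mul, eval_C, eval_pow, eval_X]
    ring
  have hroots := encard_setOf_eval_pow_add_mul_eq_zero 2 (f := f) (by simp [hdeg]) hu
  simp only [heval, hdeg] at hroots
  exact hroots

end IsSepClosed

theorem stmt19_general (F : Type*) [Field F] [IsSepClosed F] [CharP F 2] (c1 c3 : F) :
    {q : F × F × F | q.1 ≠ 0 ∧
      q.1 ^ 4096 + c3 ^ 32 * q.1 ^ 1024 + c1 ^ 16 * q.1 ^ 256 + c3 ^ 16 * q.1 ^ 64 +
        c1 ^ 4 * q.1 ^ 16 + c3 ^ 2 * q.1 ^ 4 + q.1 = 0 ∧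
      q.1 ^ 36 * q.2.1 ^ 6 + q.1 ^ 24 * q.2.1 ^ 4 + q.1 ^ 12 * q.2.1 ^ 2 +
        q.1 ^ 84 * q.2.1 + q.1 ^ 1092 + c3 ^ 8 * q.1 ^ 324 + q.1 ^ 312 + q.1 ^ 156 +
        c1 ^ 4 * q.1 ^ 132 + c3 ^ 2 * q.1 ^ 120 + q.1 ^ 117 + c3 * q.1 ^ 84 + 1 = 0 ∧
      q.1 ^ 576 + q.1 ^ 264 + c3 ^ 4 * q.1 ^ 192 + (q.2.2 ^ 4 + q.2.2) * q.1 ^ 160 +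
        q.1 ^ 108 + q.2.1 ^ 8 = 0}.encard = (98280 : ℕ) := by
  let A : Set F := {a | a ≠ 0 ∧ a ^ 4096 + c3 ^ 32 * a ^ 1024 + c1 ^ 16 * a ^ 256 +
    c3 ^ 16 * a ^ 64 + c1 ^ 4 * a ^ 16 + c3 ^ 2 * a ^ 4 + a = 0}
  let T₀ (a : F) : Set F := {t | a ^ 36 * t ^ 6 + a ^ 24 * t ^ 4 + a ^ 12 * t ^ 2 + a ^ 84 * t +
    (a ^ 1092 + c3 ^ 8 * a ^ 324 + a ^ 312 + a ^ 156 + c1 ^ 4 * a ^ 132 + c3 ^ 2 * a ^ 120 +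
      a ^ 117 + c3 * a ^ 84 + 1) = 0}
  let X₀ (a t : F) : Set F := {x | (x ^ 4 + x) * a ^ 160 +
    (a ^ 576 + a ^ 264 + c3 ^ 4 * a ^ 192 + a ^ 108 + t ^ 8) = 0}
  have hA : A.encard = 4095 := encard_nonzero_roots_additive ..
  have hT₀ (a : F) (ha : a ≠ 0) : (T₀ a).encard = 6 :=
    encard_roots_sextic (pow_ne_zero _ ha) _ _ (pow_ne_zero _ ha) _
  have hX₀ (a t : F) (ha : a ≠ 0) : (X₀ a t).encard = 4 := encard_roots_quartic (pow_ne_zero _ ha) _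
  have hT₀X₀ (a : F) (ha : a ∈ A) :
      {y : F × F | y.1 ∈ T₀ a ∧ y.2 ∈ X₀ a y.1}.encard = (24 : ℕ) := by
    rw [encard_setOf_mem_and_mem (n := 4) fun t _ => hX₀ a t ha.1, hT₀ a ha.1]
    rfl
  trans {q : F × F × F | q.1 ∈ A ∧ q.2 ∈ {y : F × F | y.1 ∈ T₀ q.1 ∧ y.2 ∈ X₀ q.1 y.1}}.encard
  · congr 1
    ext ⟨a, t, x⟩
    simp only [A, T₀, X₀, Set.mem_ofPred_eq, and_assoc]
    ring_nf
  · rw [encard_setOf_mem_and_mem hT₀X₀, hA]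
    rfl

theorem stmt19 (F : Type*) [Field F] [IsAlgClosed F] [CharP F 2] (c1 c3 : F) :
    {q : F × F × F | q.1 ≠ 0 ∧
      q.1 ^ 4096 + c3 ^ 32 * q.1 ^ 1024 + c1 ^ 16 * q.1 ^ 256 + c3 ^ 16 * q.1 ^ 64 +
        c1 ^ 4 * q.1 ^ 16 + c3 ^ 2 * q.1 ^ 4 + q.1 = 0 ∧
      q.1 ^ 36 * q.2.1 ^ 6 + q.1 ^ 24 * q.2.1 ^ 4 + q.1 ^ 12 * q.2.1 ^ 2 +
        q.1 ^ 84 * q.2.1 + q.1 ^ 1092 + c3 ^ 8 * q.1 ^ 324 + q.1 ^ 312 + q.1 ^ 156 +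
        c1 ^ 4 * q.1 ^ 132 + c3 ^ 2 * q.1 ^ 120 + q.1 ^ 117 + c3 * q.1 ^ 84 + 1 = 0 ∧
      q.1 ^ 576 + q.1 ^ 264 + c3 ^ 4 * q.1 ^ 192 + (q.2.2 ^ 4 + q.2.2) * q.1 ^ 160 +
        q.1 ^ 108 + q.2.1 ^ 8 = 0}.Finite ∧
    {q : F × F × F | q.1 ≠ 0 ∧
      q.1 ^ 4096 + c3 ^ 32 * q.1 ^ 1024 + c1 ^ 16 * q.1 ^ 256 + c3 ^ 16 * q.1 ^ 64 +
        c1 ^ 4 * q.1 ^ 16 + c3 ^ 2 * q.1 ^ 4 + q.1 = 0 ∧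
      q.1 ^ 36 * q.2.1 ^ 6 + q.1 ^ 24 * q.2.1 ^ 4 + q.1 ^ 12 * q.2.1 ^ 2 +
        q.1 ^ 84 * q.2.1 + q.1 ^ 1092 + c3 ^ 8 * q.1 ^ 324 + q.1 ^ 312 + q.1 ^ 156 +
        c1 ^ 4 * q.1 ^ 132 + c3 ^ 2 * q.1 ^ 120 + q.1 ^ 117 + c3 * q.1 ^ 84 + 1 = 0 ∧
      q.1 ^ 576 + q.1 ^ 264 + c3 ^ 4 * q.1 ^ 192 + (q.2.2 ^ 4 + q.2.2) * q.1 ^ 160 +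
        q.1 ^ 108 + q.2.1 ^ 8 = 0}.ncard = 98280 := by
  have hcard := stmt19_general F c1 c3
  exact ⟨Set.finite_of_encard_eq_coe hcard, by rw [Set.ncard_def, hcard, ENat.toNat_natCast]⟩
end
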